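/- Let π_* denote the policy for 𝔅_n in which stay(n) and travel(1) are active, enter(i) is active for all i ∈ {1,…,n}, and leave(j) is active for all j ∈ {1,…,n−1}. Then π_* is weak unichain, and π_* is optimal for 𝔅_n: for every weak unichain policy π̃ for 𝔅_n and every vertex v, Val_{π_*}(v) ≥ Val_{π̃}(v). -/

import Mathlib

/-! ## The Markov decision process `𝔅_n` -/

/-- Vertices of the MDP `𝔅_n`: a transportation vertex `t`, a sink `s`, a dummy vertex `d`,
and vertices `a i`, `b i` for `i ∈ {1,…,n}`. -/
inductive BV : Type where
  | t : BV
  | s : BV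
  | d : BV
  | a : ℕ → BV
  | b : ℕ → BV
deriving DecidableEq

/-- The vertex `a i` for `i ∈ {1,…,n+1}`, with the convention `a (n+1) = s`. -/
def aN (n i : ℕ) : BV := if i = n + 1 then BV.s else BV.a i

/-- The vertex `b i` for `i ∈ {1,…,n+1}`, with the convention `b (n+1) = d`. -/
def bN (n i : ℕ) : BV := if i = n + 1 then BV.d else BV.b i

/-- The vertex set of `𝔅_n`. -/
def IsBVertex (n : ℕ) : BV → Prop
  | BV.t => True
  | BV.s => True
  | BV.d => True
  | BV.a i => 1 ≤ i ∧ i ≤ n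
  | BV.b i => 1 ≤ i ∧ i ≤ n

/-- The edge relation of `𝔅_n`: travel, enter, skip, board, stay, leave edges,
the edge `(d,s)` and the self-loop `(s,s)`. -/
def BEdge (n : ℕ) (u v : BV) : Prop :=
  (∃ i, 1 ≤ i ∧ i ≤ n ∧ u = BV.t ∧ v = BV.a i) ∨
  (∃ i, 1 ≤ i ∧ i ≤ n ∧ u = BV.a i ∧ v = BV.b i) ∨
  (∃ i, 1 ≤ i ∧ i ≤ n ∧ u = BV.a i ∧ v = aN n (i + 1)) ∨
  (∃ i, 1 ≤ i ∧ i ≤ n ∧ u = BV.a i ∧ v = BV.t) ∨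
  (∃ i, 1 ≤ i ∧ i ≤ n ∧ u = BV.b i ∧ v = bN n (i + 1)) ∨
  (∃ i, 1 ≤ i ∧ i ≤ n ∧ u = BV.b i ∧ v = aN n (i + 1)) ∨
  (u = BV.d ∧ v = BV.s) ∨ (u = BV.s ∧ v = BV.s)

/-- The reward function of `𝔅_n`: `r(enter i) = 2^i`, `r(stay i) = 3/4`,
`r(board i) = -2^i + 5/4`, and reward `0` on all other edges. -/
def rB (n : ℕ) (u v : BV) : ℚ :=
  match u, v with
  | BV.a i, BV.b j => if i = j then 2 ^ i else 0
  | BV.a i, BV.t => -(2 ^ i) + 5 / 4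
  | BV.b i, BV.b j => if j = i + 1 then 3 / 4 else 0
  | BV.b i, BV.d => if i = n then 3 / 4 else 0
  | _, _ => 0

/-- A policy for `𝔅_n` chooses an outgoing edge at every vertex. -/
def IsBPolicy (n : ℕ) (π : BV → BV) : Prop := ∀ u, IsBVertex n u → BEdge n u (π u)

/-- A policy is weak unichain if it reaches the sink `s` from every vertex. -/
def BWeakUnichain (n : ℕ) (π : BV → BV) : Prop :=
  ∀ u, IsBVertex n u → ∃ k, π^[k] u = BV.s

open Classical in
/-- The value of a vertex `v` w.r.t. a (weak unichain) policy `π`: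
the sum of the rewards along the path that `π` takes from `v` to the sink `s`. -/
noncomputable def BVal (n : ℕ) (π : BV → BV) (v : BV) : ℚ :=
  if h : ∃ k, π^[k] v = BV.s then
    ∑ i ∈ Finset.range (Nat.find h), rB n (π^[i] v) (π^[i + 1] v)
  else 0

/-- The reduced costs of the edge `(u,v)` w.r.t. the policy `π`. -/
noncomputable def zB (n : ℕ) (π : BV → BV) (u v : BV) : ℚ :=
  rB n u v + BVal n π v - BVal n π u

/-- The edge `(u,v)` is an improving switch for `π` if its reduced costs are positive. -/
def BImproving (n : ℕ) (π : BV → BV) (u v : BV) : Prop :=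
  BEdge n u v ∧ 0 < zB n π u v

/-- The Bland numbering `𝒩_{𝔅_n}` of the edges of `𝔅_n`. -/
def NB (n : ℕ) (u v : BV) : ℕ :=
  match u, v with
  | BV.t, BV.a i => i
  | BV.a i, BV.b _ => n + 1 + 5 * (i - 1)
  | BV.a i, BV.a _ => n + 2 + 5 * (i - 1)
  | BV.a i, BV.s => n + 2 + 5 * (i - 1)
  | BV.a i, BV.t => n + 3 + 5 * (i - 1)
  | BV.b i, BV.b _ => n + 4 + 5 * (i - 1)
  | BV.b i, BV.d => n + 4 + 5 * (i - 1)
  | BV.b i, BV.a _ => n + 5 + 5 * (i - 1)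
  | BV.b i, BV.s => n + 5 + 5 * (i - 1)
  | BV.d, BV.s => 6 * n + 1
  | BV.s, BV.s => 6 * n + 2
  | _, _ => 0

/-- One step of Bland's policy iteration with edge numbering `N`:
apply the improving switch with the smallest number. -/
def IsBlandStep (n : ℕ) (N : BV → BV → ℕ) (π π' : BV → BV) : Prop :=
  ∃ u v, BImproving n π u v ∧ (∀ u' v', BImproving n π u' v' → N u v ≤ N u' v') ∧
    π' = Function.update π u v

/-- `BlandReaches n N π ψ` says that Bland's policy iteration started at `π` visits `ψ`. -/
def BlandReaches (n : ℕ) (N : BV → BV → ℕ) : (BV → BV) → (BV → BV) → Prop :=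
  Relation.ReflTransGen (IsBlandStep n N)

/-- The canonical policy `π_0` for `0`: `travel 1`, `skip i` and `leave i` are active. -/
def pi0 (n : ℕ) : BV → BV := fun u =>
  match u with
  | BV.t => BV.a 1
  | BV.a i => aN n (i + 1)
  | BV.b i => aN n (i + 1)
  | BV.d => BV.s
  | BV.s => BV.s

/-- The optimal policy `π_*`: `travel 1`, `enter i` for all `i`, `leave j` for `j < n`,
and `stay n` are active. -/
def piStar (n : ℕ) : BV → BV := fun u =>
  match u with
  | BV.t => BV.a 1
  | BV.a i => BV.b i
  | BV.b i => if i = n then BV.d else BV.a (i + 1)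
  | BV.d => BV.s
  | BV.s => BV.s

/-! ## Bits and canonical policies -/

/-- The least significant set bit `ℓ_1(x)` (1-based). -/
noncomputable def lsb (x : ℕ) : ℕ := sInf {i | 1 ≤ i ∧ Nat.testBit x (i - 1)}

/-- The most significant set bit `m(x)` (1-based). -/
noncomputable def msb1 (x : ℕ) : ℕ := sSup {i | 1 ≤ i ∧ Nat.testBit x (i - 1)}

/-- The least unset bit `ℓ_0(x)` (1-based). -/
noncomputable def lzero (x : ℕ) : ℕ := sInf {i | 1 ≤ i ∧ ¬ Nat.testBit x (i - 1)}

/-- `L_i(x) = max { j ≤ i-2 | x_j = 1 or j = 1 }` (1-based bits). -/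
noncomputable def Lfun (i x : ℕ) : ℕ :=
  sSup {j | 1 ≤ j ∧ j ≤ i - 2 ∧ (Nat.testBit x (j - 1) ∨ j = 1)}

/-- `IsCanonical n x π` says that `π` is the canonical policy `π_x` for `x`. -/
noncomputable def IsCanonical (n x : ℕ) (π : BV → BV) : Prop :=
  IsBPolicy n π ∧
  if x = 0 then
    π BV.t = BV.a 1 ∧
      ∀ i, 1 ≤ i → i ≤ n → π (BV.a i) = aN n (i + 1) ∧ π (BV.b i) = aN n (i + 1)
  else
    π BV.t = BV.a (lsb x) ∧
    π (BV.b (msb1 x)) = aN n (msb1 x + 1) ∧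
    (∀ i, msb1 x < i → i ≤ n → π (BV.a i) = aN n (i + 1) ∧ π (BV.b i) = aN n (i + 1)) ∧
    ∀ i, 1 ≤ i → i ≤ n → Nat.testBit x (i - 1) →
      π (BV.a i) = BV.b i ∧
      (i = 2 → π (BV.b 1) = BV.a 2 ∧ (¬ Nat.testBit x 0 → π (BV.a 1) = BV.a 2)) ∧
      (3 ≤ i → Nat.testBit x (i - 2) → π (BV.b (i - 1)) = BV.a i) ∧
      (3 ≤ i → ¬ Nat.testBit x (i - 2) →
        π (BV.b (i - 1)) = BV.b i ∧ π (BV.a (i - 1)) = BV.a i ∧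
        π (BV.b (i - 2)) = BV.a (i - 1) ∧
        (Lfun i x < i - 2 →
          ∀ j, Lfun i x + 1 ≤ j → j ≤ i - 2 →
            π (BV.a j) = BV.t ∧ π (BV.b (j - 1)) = BV.b j) ∧
        (Lfun i x = 1 → ¬ Nat.testBit x 0 → π (BV.a 1) = BV.t))

/-- Activating a list of edges in a policy, from left to right. -/
def activateList (π : BV → BV) (L : List (BV × BV)) : BV → BV :=
  L.foldl (fun σ e => Function.update σ e.1 e.2) π

/-- The canonical phases w.r.t. an odd number `x` (with `ℓ := ℓ_0(x)`), as a list of edges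
to be activated in order. -/
noncomputable def phaseList (n x : ℕ) : List (BV × BV) :=
  let ℓ := lzero x
  (if Nat.testBit x ℓ then [(BV.b ℓ, aN n (ℓ + 1))] else []) ++
  (if Nat.testBit x ℓ ∨ msb1 x < ℓ then [(BV.b (ℓ - 1), BV.b ℓ)] else []) ++
  [(BV.a ℓ, BV.b ℓ), (BV.t, BV.a ℓ)] ++
  ((List.range (ℓ - 2)).map fun j => (BV.a (j + 1), BV.t)) ++
  [(BV.a (ℓ - 1), BV.a ℓ)] ++
  (((List.range (ℓ - 3)).reverse).map fun j => (BV.b (j + 1), BV.b (j + 2))) ++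
  (if ℓ = 2 then [(BV.b 1, BV.a 2)] else [])

/-! ## The Markov decision process `𝔇_n` -/

/-- Vertices of `𝔇_n`: the original vertices (`base`), and for every edge `(v,w)` of `𝔅_n`
other than the self-loop, the gadget vertices `x v w`, `y v w`, `z v w`. -/
inductive DV : Type where
  | base : BV → DV
  | x : BV → BV → DV
  | y : BV → BV → DV
  | z : BV → BV → DV
deriving DecidableEq

/-- The edges of `𝔅_n` that get replaced by gadgets (all edges except the self-loop `(s,s)`). -/
def DEdgePair (n : ℕ) (v w : BV) : Prop := BEdge n v w ∧ v ≠ BV.s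

/-- The vertex set of `𝔇_n`. -/
def IsDVertex (n : ℕ) : DV → Prop
  | DV.base v => IsBVertex n v
  | DV.x v w => DEdgePair n v w
  | DV.y v w => DEdgePair n v w
  | DV.z v w => DEdgePair n v w

/-- The agent vertices of `𝔇_n` (all vertices except the randomization vertices `y v w`). -/
def IsDAgent (n : ℕ) : DV → Prop
  | DV.base v => IsBVertex n v
  | DV.x v w => DEdgePair n v w
  | DV.y _ _ => False
  | DV.z v w => DEdgePair n v w

/-- The agent edges of `𝔇_n`. -/
def DEdge (n : ℕ) (u u' : DV) : Prop :=
  (∃ v w, DEdgePair n v w ∧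
    ((u = DV.base v ∧ u' = DV.x v w) ∨ (u = DV.x v w ∧ u' = DV.base v) ∨
     (u = DV.x v w ∧ u' = DV.y v w) ∨ (u = DV.z v w ∧ u' = DV.base w))) ∨
  (u = DV.base BV.s ∧ u' = DV.base BV.s)

/-- The reward function of `𝔇_n`: the edge `(z v w, w)` carries the reward of the original
edge `(v,w)`; all other agent edges have reward `0`. -/
def rD (n : ℕ) (u u' : DV) : ℚ :=
  match u, u' with
  | DV.z v w, DV.base w' => if w' = w then rB n v w else 0
  | _, _ => 0

/-- A policy for `𝔇_n` chooses an outgoing agent edge at every agent vertex. -/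
def IsDPolicy (n : ℕ) (π : DV → DV) : Prop := ∀ u, IsDAgent n u → DEdge n u (π u)

/-- `IsDVal n p π V` says that `V` satisfies the Bellman equations characterizing the value
function of the policy `π` for `𝔇_n` with probabilities `p`, with `V s = 0`. -/
def IsDVal (n : ℕ) (p : BV → ℚ) (π : DV → DV) (V : DV → ℚ) : Prop :=
  V (DV.base BV.s) = 0 ∧
  (∀ u, IsDAgent n u → V u = rD n u (π u) + V (π u)) ∧
  (∀ v w, DEdgePair n v w →
    V (DV.y v w) = p v * V (DV.z v w) + (1 - p v) * V (DV.base v))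

open Classical in
/-- The value function of a (weak unichain) policy `π` for `𝔇_n`: the unique solution of the
Bellman equations (normalized to `0` outside the vertex set). -/
noncomputable def DVal (n : ℕ) (p : BV → ℚ) (π : DV → DV) : DV → ℚ :=
  if h : ∃! V : DV → ℚ, IsDVal n p π V ∧ ∀ u, ¬ IsDVertex n u → V u = 0 then
    h.exists.choose
  else fun _ => 0

/-- The reduced costs of an agent edge `(u,u')` of `𝔇_n` w.r.t. the policy `π`. -/
noncomputable def zD (n : ℕ) (p : BV → ℚ) (π : DV → DV) (u u' : DV) : ℚ :=
  rD n u u' + DVal n p π u' - DVal n p π u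

/-- An agent edge of `𝔇_n` is an improving switch if its reduced costs are positive. -/
def DImproving (n : ℕ) (p : BV → ℚ) (π : DV → DV) (u u' : DV) : Prop :=
  DEdge n u u' ∧ 0 < zD n p π u u'

/-- One (agent or positive-probability randomization) step of the process `𝔇_n` under `π`. -/
def DStep (n : ℕ) (p : BV → ℚ) (π : DV → DV) (u u' : DV) : Prop :=
  (IsDAgent n u ∧ u' = π u) ∨
  (∃ v w, DEdgePair n v w ∧ u = DV.y v w ∧
    ((u' = DV.z v w ∧ 0 < p v) ∨ (u' = DV.base v ∧ 0 < 1 - p v)))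

/-- A policy for `𝔇_n` is weak unichain if it reaches `s` with probability one from every
vertex, i.e. `s` is reachable via active/positive-probability steps from every vertex. -/
def DWeakUnichain (n : ℕ) (p : BV → ℚ) (π : DV → DV) : Prop :=
  ∀ u, IsDVertex n u → Relation.ReflTransGen (DStep n p π) u (DV.base BV.s)

/-- The twin policy of a policy `π` for `𝔅_n`: every vertex `v ≠ s` is `π v`-oriented. -/
def twin (π : BV → BV) : DV → DV := fun u =>
  match u with
  | DV.base v => if v = BV.s then DV.base BV.s else DV.x v (π v)
  | DV.x v w => if w = π v then DV.y v w else DV.base v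
  | DV.y v w => DV.y v w
  | DV.z _ w => DV.base w

/-- The vertex numbering `𝒩_V` of `𝔅_n`: the order `(t, a 1, b 1, a 2, b 2, …, a n, b n, d, s)`. -/
def NV (n : ℕ) : BV → ℕ
  | BV.t => 1
  | BV.a i => 2 * i
  | BV.b i => 2 * i + 1
  | BV.d => 2 * n + 2
  | BV.s => 2 * n + 3

/-- The specific probabilities `p_v = 2^{-𝒩_V(v)·(n+5)}`. -/
noncomputable def pSpec (n : ℕ) (v : BV) : ℚ := (2 : ℚ) ^ (-((NV n v * (n + 5) : ℕ) : ℤ))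

/-- The set `B(v)` of agent edges of `𝔇_n` belonging to the vertex `v`. -/
def Belongs (n : ℕ) (v : BV) (e : DV × DV) : Prop :=
  ∃ w, DEdgePair n v w ∧
    (e = (DV.x v w, DV.y v w) ∨ e = (DV.base v, DV.x v w) ∨ e = (DV.x v w, DV.base v))

/-- Applying the improving switch `e` to the policy `π` yields `π'`. -/
def DApply (n : ℕ) (p : BV → ℚ) (π : DV → DV) (e : DV × DV) (π' : DV → DV) : Prop :=
  DImproving n p π e.1 e.2 ∧ π' = Function.update π e.1 e.2

/-- One step of Bland's policy iteration on `𝔇_n` with edge numbering `N`. -/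
def IsBlandStepD (n : ℕ) (p : BV → ℚ) (N : DV → DV → ℕ) (π π' : DV → DV) : Prop :=
  ∃ u u', DImproving n p π u u' ∧ (∀ a b, DImproving n p π a b → N u u' ≤ N a b) ∧
    π' = Function.update π u u'

/-- One step of Dantzig's policy iteration on `𝔇_n`: apply an improving switch of maximal
reduced costs. -/
def DantzigStep (n : ℕ) (p : BV → ℚ) (π π' : DV → DV) : Prop :=
  ∃ u u', DImproving n p π u u' ∧
    (∀ a b, DImproving n p π a b → zD n p π a b ≤ zD n p π u u') ∧
    π' = Function.update π u u'

/-- The finite set of vertices of `𝔅_n`, as a `Finset`. -/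
noncomputable def BVSet (n : ℕ) : Finset BV :=
  {BV.t, BV.d, BV.s} ∪ (Finset.Icc 1 n).image BV.a ∪ (Finset.Icc 1 n).image BV.b

/-- The finite set of agent vertices of `𝔇_n`, as a `Finset`. -/
noncomputable def DAgentSet (n : ℕ) : Finset DV := by
  classical
  exact ((BVSet n).image DV.base) ∪
    (((BVSet n ×ˢ BVSet n).filter fun e => DEdgePair n e.1 e.2).image fun e => DV.x e.1 e.2) ∪
    (((BVSet n ×ˢ BVSet n).filter fun e => DEdgePair n e.1 e.2).image fun e => DV.z e.1 e.2)

/-- The objective of the Largest Increase rule: the sum of the values of all agent vertices. -/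
noncomputable def LIobj (n : ℕ) (p : BV → ℚ) (π : DV → DV) : ℚ :=
  ∑ u ∈ DAgentSet n, DVal n p π u

/-- One step of the Largest Increase policy iteration on `𝔇_n`: apply an improving switch
maximizing the sum of all agent vertex values of the resulting policy. -/
def LIStep (n : ℕ) (p : BV → ℚ) (π π' : DV → DV) : Prop :=
  ∃ u u', DImproving n p π u u' ∧
    (∀ a b, DImproving n p π a b →
      LIobj n p (Function.update π a b) ≤ LIobj n p (Function.update π u u')) ∧
    π' = Function.update π u u'

/-- `N` is a Bland numbering `𝒩_{𝔇_n}` for `𝔇_n`: it is injective on agent edges, the edges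
`(x v w, v)` all come first, within each gadget `(x v w, y v w)` precedes `(v, x v w)`,
the gadget blocks are ordered according to `𝒩_{𝔅_n}`, and the self-loop comes last. -/
def IsDBlandNumbering (n : ℕ) (N : DV → DV → ℕ) : Prop :=
  (∀ u₁ u₂ u₁' u₂', DEdge n u₁ u₂ → DEdge n u₁' u₂' → N u₁ u₂ = N u₁' u₂' →
    u₁ = u₁' ∧ u₂ = u₂') ∧
  (∀ v w v' w', DEdgePair n v w → DEdgePair n v' w' →
    N (DV.x v w) (DV.base v) < N (DV.x v' w') (DV.y v' w')) ∧
  (∀ v w, DEdgePair n v w → N (DV.x v w) (DV.y v w) < N (DV.base v) (DV.x v w)) ∧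
  (∀ v w v' w', DEdgePair n v w → DEdgePair n v' w' → NB n v w < NB n v' w' →
    N (DV.base v) (DV.x v w) < N (DV.x v' w') (DV.y v' w')) ∧
  (∀ v w, DEdgePair n v w → N (DV.base v) (DV.x v w) < N (DV.base BV.s) (DV.base BV.s))

/-!
Optimality is certified by policy iteration's own stopping criterion: along the path of a weak
unichain policy `π`, the absence of improving switches for `σ` lets `BVal n σ` decrease by at least
the collected reward in each step, so `BVal n σ` dominates `BVal n π`. The policy `π_*` walks
`t, a 1, b 1, a 2, …, a n, b n, d, s`, collecting `2 + 4 + ⋯ + 2 ^ n + 3 / 4`; this gives a closed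
form for its values, against which each edge of `𝔅_n` is seen not to be improving.
-/

section BEdge

variable {n : ℕ} {u v : BV}

lemma BEdge.isBVertex_left (h : BEdge n u v) : IsBVertex n u := by
  rcases h with ⟨_, -, -, rfl, -⟩ | ⟨_, h₁, h₂, rfl, -⟩ | ⟨_, h₁, h₂, rfl, -⟩ |
    ⟨_, h₁, h₂, rfl, -⟩ | ⟨_, h₁, h₂, rfl, -⟩ | ⟨_, h₁, h₂, rfl, -⟩ | ⟨rfl, -⟩ | ⟨rfl, -⟩
  exacts [trivial, ⟨h₁, h₂⟩, ⟨h₁, h₂⟩, ⟨h₁, h₂⟩, ⟨h₁, h₂⟩, ⟨h₁, h₂⟩, trivial, trivial]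

lemma isBVertex_aN_succ {i : ℕ} (hi : i ≤ n) : IsBVertex n (aN n (i + 1)) := by
  unfold aN
  split_ifs <;> simp only [IsBVertex]
  omega

lemma isBVertex_bN_succ {i : ℕ} (hi : i ≤ n) : IsBVertex n (bN n (i + 1)) := by
  unfold bN
  split_ifs <;> simp only [IsBVertex]
  omega

lemma BEdge.isBVertex_right (h : BEdge n u v) : IsBVertex n v := by
  rcases h with ⟨_, h₁, h₂, -, rfl⟩ | ⟨_, h₁, h₂, -, rfl⟩ | ⟨_, -, h₂, -, rfl⟩ |
    ⟨_, -, -, -, rfl⟩ | ⟨_, -, h₂, -, rfl⟩ | ⟨_, -, h₂, -, rfl⟩ | ⟨-, rfl⟩ | ⟨-, rfl⟩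
  exacts [⟨h₁, h₂⟩, ⟨h₁, h₂⟩, isBVertex_aN_succ h₂, trivial, isBVertex_bN_succ h₂,
    isBVertex_aN_succ h₂, trivial, trivial]

end BEdge

section Policy

variable {n : ℕ} {π σ : BV → BV}

lemma NV_le_NV_s {v : BV} (hv : IsBVertex n v) : NV n v ≤ NV n BV.s := by
  cases v <;> simp only [IsBVertex, NV] at hv ⊢ <;> omega

lemma IsBPolicy.bWeakUnichain_of_NV_lt (hπ : IsBPolicy n π)
    (hlt : ∀ v, IsBVertex n v → v ≠ BV.s → NV n v < NV n (π v)) : BWeakUnichain n π := by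
  intro v hv
  induction hm : NV n BV.s - NV n v using Nat.strong_induction_on generalizing v with
  | _ m ih =>
    by_cases hvs : v = BV.s
    · exact ⟨0, hvs⟩
    have hπv : IsBVertex n (π v) := (hπ v hv).isBVertex_right
    have hcloser : NV n BV.s - NV n (π v) < m := by
      have := hlt v hv hvs
      have := NV_le_NV_s hπv
      omega
    obtain ⟨k, hk⟩ := ih _ hcloser _ hπv rfl
    exact ⟨k + 1, hk⟩

lemma BWeakUnichain.induction {P : BV → Prop} (hu : BWeakUnichain n π) (hπ : IsBPolicy n π)
    (sink : P BV.s) (step : ∀ v, IsBVertex n v → v ≠ BV.s → P (π v) → P v)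
    {v : BV} (hv : IsBVertex n v) : P v := by
  obtain ⟨k, hk⟩ := hu v hv
  induction k generalizing v with
  | zero => exact (show v = BV.s from hk) ▸ sink
  | succ k ih =>
    by_cases hvs : v = BV.s
    · exact hvs ▸ sink
    · exact step v hv hvs (ih (hπ v hv).isBVertex_right hk)

variable (n π) in
lemma BVal_s : BVal n π BV.s = 0 := by
  have h : ∃ k, π^[k] BV.s = BV.s := ⟨0, rfl⟩
  rw [BVal, dif_pos h, (Nat.find_eq_zero h).2 rfl, Finset.sum_range_zero]

lemma BVal_eq_rB_add {v : BV} (hvs : v ≠ BV.s) (h : ∃ k, π^[k] v = BV.s) :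
    BVal n π v = rB n v (π v) + BVal n π (π v) := by
  have h' : ∃ k, π^[k] (π v) = BV.s := by
    obtain ⟨_ | k, hk⟩ := h
    · exact absurd hk hvs
    · exact ⟨k, hk⟩
  rw [BVal, BVal, dif_pos h, dif_pos h', Nat.find_comp_succ h h' hvs, Finset.sum_range_succ',
    add_comm]
  rfl

lemma BVal_le_of_forall_not_BImproving (hπ : IsBPolicy n π) (hu : BWeakUnichain n π)
    (hσ : ∀ u v, ¬ BImproving n σ u v) {v : BV} (hv : IsBVertex n v) :
    BVal n π v ≤ BVal n σ v := by
  refine hu.induction (P := fun v => BVal n π v ≤ BVal n σ v) hπ ?sink ?step hv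
  case sink => rw [BVal_s, BVal_s]
  case step =>
    intro v hv hvs ih
    have hz : zB n σ v (π v) ≤ 0 := not_lt.1 fun hpos => hσ v (π v) ⟨hπ v hv, hpos⟩
    calc BVal n π v = rB n v (π v) + BVal n π (π v) := BVal_eq_rB_add hvs (hu v hv)
      _ ≤ rB n v (π v) + BVal n σ (π v) := by gcongr
      _ ≤ BVal n σ v := sub_nonpos.1 hz

end Policy

section PiStar

variable {n : ℕ}

lemma isBPolicy_piStar (hn : 1 ≤ n) : IsBPolicy n (piStar n) := by
  rintro (_ | _ | _ | i | i) hu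
  · exact .inl ⟨1, le_rfl, hn, rfl, rfl⟩
  · simp [BEdge, piStar]
  · simp [BEdge, piStar]
  · exact .inr (.inl ⟨i, hu.1, hu.2, rfl, rfl⟩)
  · obtain rfl | hi := eq_or_ne i n
    · simp [BEdge, piStar, bN, hu.1]
    · simp [BEdge, piStar, aN, hi, hu.1, hu.2]

lemma NV_lt_NV_piStar {v : BV} (hvs : v ≠ BV.s) : NV n v < NV n (piStar n v) := by
  cases v with
  | s => exact absurd rfl hvs
  | b i =>
    simp only [piStar]
    split_ifs <;> simp only [NV] <;> omega
  | _ => simp only [piStar, NV]; omega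

lemma bWeakUnichain_piStar (hn : 1 ≤ n) : BWeakUnichain n (piStar n) :=
  (isBPolicy_piStar hn).bWeakUnichain_of_NV_lt fun _ _ => NV_lt_NV_piStar

/-- The value function of `π_*` in closed form: from `a i` on, `π_*` collects
`2 ^ i + ⋯ + 2 ^ n = 2 ^ (n + 1) - 2 ^ i` on the `enter` edges and `3 / 4` on `stay n`. -/
def piStarVal (n : ℕ) : BV → ℚ
  | BV.t => 2 ^ (n + 1) - 2 + 3 / 4
  | BV.s => 0
  | BV.d => 0
  | BV.a i => 2 ^ (n + 1) - 2 ^ i + 3 / 4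
  | BV.b i => 2 ^ (n + 1) - 2 ^ (i + 1) + 3 / 4

lemma piStarVal_eq_rB_add (n : ℕ) (v : BV) :
    piStarVal n v = rB n v (piStar n v) + piStarVal n (piStar n v) := by
  cases v with
  | a i => simp only [rB, piStarVal, piStar, if_true]; ring
  | b i => obtain rfl | hi := eq_or_ne i n <;> simp [rB, piStarVal, piStar, *]
  | _ => simp [rB, piStarVal, piStar]

lemma BVal_piStar {v : BV} (hn : 1 ≤ n) (hv : IsBVertex n v) :
    BVal n (piStar n) v = piStarVal n v := by
  have hu := bWeakUnichain_piStar hn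
  refine hu.induction (P := fun v => BVal n (piStar n) v = piStarVal n v)
    (isBPolicy_piStar hn) (BVal_s n _) (fun v hv hvs ih => ?_) hv
  rw [BVal_eq_rB_add hvs (hu v hv), ih, ← piStarVal_eq_rB_add]

lemma piStarVal_aN_le (n i : ℕ) : piStarVal n (aN n i) ≤ 2 ^ (n + 1) - 2 ^ i + 3 / 4 := by
  unfold aN
  split_ifs with hi
  · simp only [hi, piStarVal]
    norm_num
  · exact le_rfl

lemma piStarVal_bN_le (n i : ℕ) : piStarVal n (bN n i) ≤ 2 ^ (n + 1) - 2 ^ i := by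
  unfold bN
  split_ifs with hi
  · simp [hi, piStarVal]
  · have : (1 : ℚ) ≤ 2 ^ i := one_le_pow₀ one_le_two
    simp only [piStarVal, pow_succ]
    linarith

lemma rB_aN (n : ℕ) (u : BV) (j : ℕ) : rB n u (aN n j) = 0 := by
  unfold aN
  split_ifs <;> cases u <;> rfl

lemma rB_b_bN_succ (n i : ℕ) : rB n (BV.b i) (bN n (i + 1)) = 3 / 4 := by
  obtain rfl | hi := eq_or_ne i n <;> simp [rB, bN, *]

lemma BEdge.rB_add_piStarVal_le {u v : BV} (h : BEdge n u v) :
    rB n u v + piStarVal n v ≤ piStarVal n u := by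
  rcases h with ⟨i, hi, -, rfl, rfl⟩ | ⟨i, -, -, rfl, rfl⟩ | ⟨i, -, -, rfl, rfl⟩ |
    ⟨i, -, -, rfl, rfl⟩ | ⟨i, -, -, rfl, rfl⟩ | ⟨i, -, -, rfl, rfl⟩ | ⟨rfl, rfl⟩ | ⟨rfl, rfl⟩
  · have : (2 : ℚ) ≤ 2 ^ i := le_self_pow₀ one_le_two (by omega)
    simp only [rB, piStarVal]
    linarith
  · exact (piStarVal_eq_rB_add n (BV.a i)).ge
  · have : (0 : ℚ) ≤ 2 ^ i := by positivity
    have := piStarVal_aN_le n (i + 1)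
    rw [rB_aN, piStarVal]
    linarith [pow_succ (2 : ℚ) i]
  · simp only [rB, piStarVal]
    linarith
  · have := piStarVal_bN_le n (i + 1)
    rw [rB_b_bN_succ, piStarVal]
    linarith
  · rw [rB_aN, zero_add]
    exact piStarVal_aN_le n (i + 1)
  · simp [rB, piStarVal]
  · simp [rB, piStarVal]

lemma not_BImproving_piStar (hn : 1 ≤ n) (u v : BV) :
    ¬ BImproving n (piStar n) u v := by
  rintro ⟨h, hz⟩
  rw [zB, BVal_piStar hn h.isBVertex_left, BVal_piStar hn h.isBVertex_right] at hz
  linarith [h.rB_add_piStarVal_le]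

end PiStar

/-- The policy `π_*` is a weak unichain policy for `𝔅_n` and is optimal:
every vertex value under `π_*` is at least the corresponding value under any
weak unichain policy. -/
theorem stmt2 (n : ℕ) (hn : 1 ≤ n) :
    IsBPolicy n (piStar n) ∧ BWeakUnichain n (piStar n) ∧
    ∀ π, IsBPolicy n π → BWeakUnichain n π →
      ∀ v, IsBVertex n v → BVal n π v ≤ BVal n (piStar n) v :=
  ⟨isBPolicy_piStar hn, bWeakUnichain_piStar hn, fun _ hπ hu _ hv =>
    BVal_le_of_forall_not_BImproving hπ hu (not_BImproving_piStar hn) hv⟩
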